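/- The market maker's worst-case loss for a fixed outcome is exactly C(q⁰) − q⁰_ω: for every ω ∈ Ω, the supremum over all share vectors q : Ω → ℝ of q_ω − C(q) equals 0 (it is approached but not attained as q_ω → ∞ with the other coordinates fixed); consequently the supremum over q of the net loss (q_ω − q⁰_ω) − (C(q) − C(q⁰)) equals C(q⁰) − q⁰_ω, which strictly exceeds C(q⁰) whenever q⁰_ω < 0. -/

import Mathlib

/-!
Factoring `exp (q ω / b)` out of the partition function gives
`C q = q ω + b log (1 + ∑ τ ≠ ω, exp ((q τ - q ω) / b))`. The logarithm is nonnegative, is positive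
as soon as there is a second outcome, and tends to `0` when `q ω → ∞` with the other coordinates
fixed.
-/

open Filter Topology

section LMSR

variable {Ω : Type*} [Fintype Ω] {b : ℝ}

/-- The cost function of the logarithmic market scoring rule with liquidity parameter `b`, i.e. the
total that traders have paid, up to a constant, once the outstanding shares are `q`. -/
noncomputable def lmsrCost (b : ℝ) (q : Ω → ℝ) : ℝ :=
  b * Real.log (∑ τ, Real.exp (q τ / b))

/-- The net loss of the market maker when trading moves the share vector from `q₀` to `q` and the
outcome is `ω`: payouts to the traders minus revenue from them. -/
noncomputable def lmsrNetLoss (b : ℝ) (ω : Ω) (q₀ q : Ω → ℝ) : ℝ :=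
  (q ω - q₀ ω) - (lmsrCost b q - lmsrCost b q₀)

theorem lmsrCost_eq_apply_add [DecidableEq Ω] (hb : b ≠ 0) (q : Ω → ℝ) (ω : Ω) :
    lmsrCost b q = q ω + b * Real.log (1 + ∑ τ ∈ {ω}ᶜ, Real.exp ((q τ - q ω) / b)) := by
  have factor : ∑ τ, Real.exp (q τ / b) =
      Real.exp (q ω / b) * (1 + ∑ τ ∈ {ω}ᶜ, Real.exp ((q τ - q ω) / b)) := by
    rw [Fintype.sum_eq_add_sum_compl ω, mul_add, mul_one, Finset.mul_sum]
    simp only [← Real.exp_add, sub_div, add_sub_cancel]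
  have hpos : 0 < 1 + ∑ τ ∈ {ω}ᶜ, Real.exp ((q τ - q ω) / b) := by positivity
  rw [lmsrCost, factor, Real.log_mul (Real.exp_ne_zero _) hpos.ne', Real.log_exp, mul_add,
    mul_div_cancel₀ _ hb]

theorem apply_le_lmsrCost (hb : 0 < b) (q : Ω → ℝ) (ω : Ω) : q ω ≤ lmsrCost b q := by
  classical
  rw [lmsrCost_eq_apply_add hb.ne' q ω, le_add_iff_nonneg_right]
  have : 0 ≤ ∑ τ ∈ {ω}ᶜ, Real.exp ((q τ - q ω) / b) := by positivity
  exact mul_nonneg hb.le (Real.log_nonneg (le_add_of_nonneg_right this))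

theorem apply_lt_lmsrCost [Nontrivial Ω] (hb : 0 < b) (q : Ω → ℝ) (ω : Ω) :
    q ω < lmsrCost b q := by
  classical
  rw [lmsrCost_eq_apply_add hb.ne' q ω, lt_add_iff_pos_right]
  obtain ⟨σ, hσ⟩ := exists_ne ω
  have : 0 < ∑ τ ∈ {ω}ᶜ, Real.exp ((q τ - q ω) / b) :=
    Finset.sum_pos (fun _ _ ↦ Real.exp_pos _) ⟨σ, by simpa using hσ⟩
  exact mul_pos hb (Real.log_pos (lt_add_of_pos_right 1 this))

theorem tendsto_sub_lmsrCost_update_atTop [DecidableEq Ω] (hb : 0 < b) (q : Ω → ℝ) (ω : Ω) :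
    Tendsto (fun t ↦ t - lmsrCost b (Function.update q ω t)) atTop (𝓝 0) := by
  have excess (t : ℝ) : t - lmsrCost b (Function.update q ω t) =
      -(b * Real.log (1 + ∑ τ ∈ {ω}ᶜ, Real.exp ((q τ - t) / b))) := by
    have others : ∀ τ ∈ ({ω}ᶜ : Finset Ω), Real.exp ((Function.update q ω t τ - t) / b) =
        Real.exp ((q τ - t) / b) := fun τ hτ ↦ by
      rw [Function.update_of_ne (by simpa using hτ)]
    rw [lmsrCost_eq_apply_add hb.ne' _ ω, Function.update_self, Finset.sum_congr rfl others,
      sub_add_cancel_left]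
  have term_tendsto (τ : Ω) : Tendsto (fun t ↦ Real.exp ((q τ - t) / b)) atTop (𝓝 0) :=
    Real.tendsto_exp_atBot.comp
      ((tendsto_atBot_add_const_left _ (q τ) tendsto_neg_atTop_atBot).atBot_div_const hb)
  have sum_tendsto :
      Tendsto (fun t ↦ 1 + ∑ τ ∈ {ω}ᶜ, Real.exp ((q τ - t) / b)) atTop (𝓝 1) := by
    simpa using (tendsto_finsetSum {ω}ᶜ fun τ _ ↦ term_tendsto τ).const_add 1
  simpa [excess] using ((sum_tendsto.log one_ne_zero).const_mul b).neg

theorem isLUB_range_apply_sub_lmsrCost (hb : 0 < b) (ω : Ω) :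
    IsLUB (Set.range fun q : Ω → ℝ ↦ q ω - lmsrCost b q) 0 := by
  classical
  refine isLUB_of_mem_closure ?_ ?_
  · rintro _ ⟨q, rfl⟩
    exact sub_nonpos.2 (apply_le_lmsrCost hb q ω)
  · refine mem_closure_of_tendsto (tendsto_sub_lmsrCost_update_atTop hb 0 ω)
      (Eventually.of_forall fun t ↦ ⟨Function.update 0 ω t, ?_⟩)
    simp only [Function.update_self]

theorem isLUB_range_lmsrNetLoss (hb : 0 < b) (ω : Ω) (q₀ : Ω → ℝ) :
    IsLUB (Set.range (lmsrNetLoss b ω q₀)) (lmsrCost b q₀ - q₀ ω) := by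
  have translate : lmsrNetLoss b ω q₀ =
      OrderIso.addRight (lmsrCost b q₀ - q₀ ω) ∘ fun q ↦ q ω - lmsrCost b q := by
    ext q
    simp only [lmsrNetLoss, Function.comp_apply, OrderIso.addRight_apply]
    ring
  rw [translate, Set.range_comp, OrderIso.isLUB_image]
  simpa using isLUB_range_apply_sub_lmsrCost hb ω

end LMSR

/-- The market maker's worst-case loss for a fixed outcome is exactly
`C(q⁰) − q⁰ ω`, where `C(q) = b·log(∑ τ, exp(q τ / b))` on a finite outcome set
with at least two elements.  For every `ω`:
(i) `⨆ q, (q ω − C q) = 0`, and it is never attained (`q ω − C q < 0` for all `q`);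
(ii) for every initial vector `q⁰`, the supremum over `q` of the net loss
`(q ω − q⁰ ω) − (C q − C q⁰)` equals `C q⁰ − q⁰ ω`; and
(iii) `C q⁰ − q⁰ ω` strictly exceeds `C q⁰` whenever `q⁰ ω < 0`. -/
theorem lmsr_worst_case_loss
    {Ω : Type*} [Fintype Ω] (hcard : 1 < Fintype.card Ω)
    (b : ℝ) (hb : 0 < b) (ω : Ω) :
    (⨆ q : Ω → ℝ, (q ω - b * Real.log (∑ τ : Ω, Real.exp (q τ / b)))) = 0 ∧
    (∀ q : Ω → ℝ, q ω - b * Real.log (∑ τ : Ω, Real.exp (q τ / b)) < 0) ∧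
    (∀ q0 : Ω → ℝ,
      (⨆ q : Ω → ℝ,
        ((q ω - q0 ω)
          - (b * Real.log (∑ τ : Ω, Real.exp (q τ / b))
            - b * Real.log (∑ τ : Ω, Real.exp (q0 τ / b)))))
        = b * Real.log (∑ τ : Ω, Real.exp (q0 τ / b)) - q0 ω ∧
      (q0 ω < 0 →
        b * Real.log (∑ τ : Ω, Real.exp (q0 τ / b))
          < b * Real.log (∑ τ : Ω, Real.exp (q0 τ / b)) - q0 ω)) := by
  have := Fintype.one_lt_card_iff_nontrivial.1 hcard
  exact ⟨(isLUB_range_apply_sub_lmsrCost hb ω).ciSup_eq,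
    fun q ↦ sub_neg.2 (apply_lt_lmsrCost hb q ω),
    fun q0 ↦ ⟨(isLUB_range_lmsrNetLoss hb ω q0).ciSup_eq, fun hq0 ↦ by linarith⟩⟩
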